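/- Let p be an odd prime, M, G finite p-groups, μ : M → G a crossed module with M powerful and μ(M) powerfully embedded in G. Then M^p ⊗ G ≤ (M ⊗ G)^p and consequently M ⊗ G is a finite powerful p-group. -/

import Mathlib

/-- The subgroup generated by `k`-th powers of elements of `N`. -/
def sPow {G : Type*} [Group G] (N : Subgroup G) (k : ℕ) : Subgroup G :=
  Subgroup.closure ((· ^ k) '' (N : Set G))

/-- A crossed module: a homomorphism `μ : M → G` with an action `φ` of `G` on `M`
by automorphisms satisfying the two crossed-module axioms. -/
structure IsCrossedModule {M G : Type*} [Group M] [Group G]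
    (μ : M →* G) (φ : G →* MulAut M) : Prop where
  map_act : ∀ (g : G) (m : M), μ (φ g m) = g * μ m * g⁻¹
  peiffer : ∀ m m' : M, φ (μ m) m' = m * m' * m⁻¹

/-- The defining relations of the nonabelian tensor product `M ⊗ G` of a crossed
module `μ : M → G` (with `G` acting on `M` via `φ`, `M` acting on `G` via `μ` and
conjugation, and `G` acting on itself by conjugation):
`mm' ⊗ g = (ᵐm' ⊗ ᵐg)(m ⊗ g)` and `m ⊗ gg' = (m ⊗ g)(ᵍm ⊗ ᵍg')`. -/
def tensorRels {M G : Type*} [Group M] [Group G] (μ : M →* G) (φ : G →* MulAut M) :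
    Set (FreeGroup (M × G)) :=
  {r | ∃ m m' g, r = FreeGroup.of (m * m', g) *
      (FreeGroup.of (φ (μ m) m', μ m * g * (μ m)⁻¹) * FreeGroup.of (m, g))⁻¹} ∪
  {r | ∃ m g g', r = FreeGroup.of (m, g * g') *
      (FreeGroup.of (m, g) * FreeGroup.of (φ g m, g * g' * g⁻¹))⁻¹}

/-- The nonabelian tensor product `M ⊗ G` of a crossed module. -/
abbrev NATensor {M G : Type*} [Group M] [Group G] (μ : M →* G) (φ : G →* MulAut M) :=
  PresentedGroup (tensorRels μ φ)

/-- The generator `m ⊗ g` of the nonabelian tensor product. -/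
def natTprod {M G : Type*} [Group M] [Group G] (μ : M →* G) (φ : G →* MulAut M)
    (m : M) (g : G) : NATensor μ φ :=
  PresentedGroup.of (m, g)

namespace NATensor

open scoped commutatorElement IsMulCommutative

variable {M G : Type*} [Group M] [Group G] {μ : M →* G} {φ : G →* MulAut M}

theorem tprod_mul_left (m m' : M) (g : G) :
    natTprod μ φ (m * m') g =
      natTprod μ φ (φ (μ m) m') (μ m * g * (μ m)⁻¹) * natTprod μ φ m g :=
  PresentedGroup.mk_eq_mk_of_mul_inv_mem (Or.inl ⟨m, m', g, rfl⟩)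

theorem tprod_mul_right (m : M) (g g' : G) :
    natTprod μ φ m (g * g') =
      natTprod μ φ m g * natTprod μ φ (φ g m) (g * g' * g⁻¹) :=
  PresentedGroup.mk_eq_mk_of_mul_inv_mem (Or.inr ⟨m, g, g', rfl⟩)

theorem hom_ext {H : Type*} [Group H] {f f' : NATensor μ φ →* H}
    (h : ∀ m g, f (natTprod μ φ m g) = f' (natTprod μ φ m g)) : f = f' :=
  PresentedGroup.ext fun x => h x.1 x.2

theorem subgroup_eq_top {H : Subgroup (NATensor μ φ)}
    (h : ∀ m g, natTprod μ φ m g ∈ H) : H = ⊤ :=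
  eq_top_iff.2 fun x _ => PresentedGroup.generated_by _ H (fun j => h j.1 j.2) x

/-- The endomorphism `m ⊗ h ↦ ᵍm ⊗ ᵍh` of `M ⊗ G`. -/
def actHom (hcm : IsCrossedModule μ φ) (g : G) : NATensor μ φ →* NATensor μ φ :=
  PresentedGroup.toGroup (f := fun x => natTprod μ φ (φ g x.1) (g * x.2 * g⁻¹)) (by
    rintro r (⟨m, m', h, rfl⟩ | ⟨m, h, h', rfl⟩)
    · simp only [map_mul, map_inv, FreeGroup.lift_apply_of, mul_inv_eq_one]
      rw [tprod_mul_left, hcm.map_act, ← MulAut.mul_apply, ← map_mul, ← MulAut.mul_apply,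
        ← map_mul]
      simp only [mul_assoc, mul_inv_rev, inv_inv, inv_mul_cancel_left, inv_mul_cancel, mul_one]
    · simp only [map_mul, map_inv, FreeGroup.lift_apply_of, mul_inv_eq_one]
      rw [show g * (h * h') * g⁻¹ = (g * h * g⁻¹) * (g * h' * g⁻¹) by group, tprod_mul_right]
      simp only [← MulAut.mul_apply, ← map_mul, mul_assoc, mul_inv_rev, inv_inv,
        inv_mul_cancel_left, inv_mul_cancel, mul_one])

theorem actHom_tprod (hcm : IsCrossedModule μ φ) (g : G) (m : M) (h : G) :
    actHom hcm g (natTprod μ φ m h) = natTprod μ φ (φ g m) (g * h * g⁻¹) :=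
  PresentedGroup.toGroup.of _

theorem actHom_one (hcm : IsCrossedModule μ φ) : actHom hcm 1 = MonoidHom.id _ :=
  hom_ext fun m h => by simp [actHom_tprod]

theorem actHom_mul (hcm : IsCrossedModule μ φ) (g g' : G) :
    actHom hcm (g * g') = (actHom hcm g).comp (actHom hcm g') :=
  hom_ext fun m h => by simp [actHom_tprod, mul_assoc]

/-- The action of `G` on `M ⊗ G`. -/
def act (hcm : IsCrossedModule μ φ) : G →* MulAut (NATensor μ φ) where
  toFun g := MonoidHom.toMulEquiv (actHom hcm g) (actHom hcm g⁻¹)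
    (by rw [← actHom_mul, inv_mul_cancel, actHom_one])
    (by rw [← actHom_mul, mul_inv_cancel, actHom_one])
  map_one' := MulEquiv.ext fun x => DFunLike.congr_fun (actHom_one hcm) x
  map_mul' g g' := MulEquiv.ext fun x => DFunLike.congr_fun (actHom_mul hcm g g') x

theorem act_tprod (hcm : IsCrossedModule μ φ) (g : G) (m : M) (h : G) :
    act hcm g (natTprod μ φ m h) = natTprod μ φ (φ g m) (g * h * g⁻¹) :=
  actHom_tprod hcm g m h

theorem tprod_mul_left_act (hcm : IsCrossedModule μ φ) (m m' : M) (g : G) :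
    natTprod μ φ (m * m') g = act hcm (μ m) (natTprod μ φ m' g) * natTprod μ φ m g := by
  rw [tprod_mul_left, act_tprod]

theorem tprod_mul_right_act (hcm : IsCrossedModule μ φ) (m : M) (g g' : G) :
    natTprod μ φ m (g * g') = natTprod μ φ m g * act hcm g (natTprod μ φ m g') := by
  rw [tprod_mul_right, act_tprod]

theorem tprod_one_left (hcm : IsCrossedModule μ φ) (g : G) : natTprod μ φ 1 g = 1 := by
  simpa using tprod_mul_left_act hcm 1 1 g

theorem tprod_one_right (hcm : IsCrossedModule μ φ) (m : M) : natTprod μ φ m 1 = 1 := by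
  simpa using tprod_mul_right_act hcm m 1 1

theorem conj_tprod (hcm : IsCrossedModule μ φ) (x : M) (g : G) :
    MulAut.conj (natTprod μ φ x g) = act hcm ⁅μ x, g⁆ := by
  have key : (MulAut.conj (natTprod μ φ x g) * act hcm (g * μ x)).toMonoidHom =
      (act hcm (μ x * g)).toMonoidHom := hom_ext fun m h => by
    have h1 := tprod_mul_left_act hcm x m (g * h)
    rw [tprod_mul_right_act hcm m, tprod_mul_right_act hcm x, tprod_mul_right_act hcm (x * m),
      tprod_mul_left_act hcm x m g, tprod_mul_left_act hcm x m h] at h1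
    simp only [map_mul, mul_assoc, mul_right_inj] at h1
    simp only [← mul_assoc, mul_left_inj] at h1
    simp only [MulEquiv.toMonoidHom_eq_coe, MonoidHom.coe_coe, MulAut.mul_apply,
      MulAut.conj_apply, map_mul, h1, mul_inv_cancel_right]
  have key' : MulAut.conj (natTprod μ φ x g) * act hcm (g * μ x) = act hcm (μ x * g) :=
    MulEquiv.ext fun t => DFunLike.congr_fun key t
  rw [eq_mul_inv_of_mul_eq key', ← map_inv, ← map_mul]
  congr 1
  simp only [commutatorElement_def, mul_inv_rev, mul_assoc]

theorem act_div_tprod (hcm : IsCrossedModule μ φ) (m x : M) (g : G) :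
    act hcm (μ m) (natTprod μ φ x g) * (natTprod μ φ x g)⁻¹ = natTprod μ φ m ⁅μ x, g⁆ := by
  have h1 := tprod_mul_right_act hcm m ⁅μ x, g⁆ g
  rw [← conj_tprod, MulAut.conj_apply,
    show ⁅μ x, g⁆ * g = μ x * g * (μ x)⁻¹ by simp [commutatorElement_def]] at h1
  have h2 := tprod_mul_left_act hcm x (x⁻¹ * m * x) g
  rw [act_tprod, hcm.peiffer, show x * (x⁻¹ * m * x) = m * x by group,
    mul_inv_cancel_right, h1, tprod_mul_left_act hcm m x] at h2
  rw [mul_inv_eq_iff_eq_mul, ← mul_left_inj (natTprod μ φ m g)]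
  simpa [mul_assoc] using h2

theorem commutator_map_eq (hcm : IsCrossedModule μ φ) (x : M) (g : G) :
    ⁅μ x, g⁆ = μ (x * (φ g x)⁻¹) := by
  simp [hcm.map_act, commutatorElement_def, mul_assoc]

theorem conj_mem_range (hcm : IsCrossedModule μ φ) (t : NATensor μ φ) :
    ∃ m : M, MulAut.conj t = act hcm (μ m) := by
  have h : ((act hcm).comp μ).range.comap MulAut.conj = ⊤ := subgroup_eq_top fun x g =>
    ⟨x * (φ g x)⁻¹, by
      rw [conj_tprod hcm, commutator_map_eq hcm]; rfl⟩
  obtain ⟨m, hm⟩ : t ∈ ((act hcm).comp μ).range.comap MulAut.conj := h ▸ Subgroup.mem_top t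
  exact ⟨m, hm.symm⟩

theorem abelianization_of_tprod_pow [Finite M] [Finite G] (hcm : IsCrossedModule μ φ)
    (m : M) (g : G) :
    Abelianization.of (natTprod μ φ m g) ^ (Nat.card G * Nat.card M) = 1 := by
  classical
  have := Fintype.ofFinite M
  have := Fintype.ofFinite G
  let a : G → Abelianization (NATensor μ φ) →* Abelianization (NATensor μ φ) :=
    fun g => Abelianization.map (act hcm g).toMonoidHom
  let f : M → G → Abelianization (NATensor μ φ) := fun m g => Abelianization.of (natTprod μ φ m g)
  have ha : ∀ g m h, a g (f m h) = f (φ g m) (g * h * g⁻¹) := fun g m h =>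
    (Abelianization.map_of _ _).trans (congrArg _ (act_tprod hcm g m h))
  have hl : ∀ x m h, f (x * m) h = a (μ x) (f m h) * f x h := fun x m h => by
    rw [ha]
    exact (congrArg Abelianization.of (tprod_mul_left x m h)).trans (map_mul _ _ _)
  have hr : ∀ m g h, f m (g * h) = f m g * a g (f m h) := fun m g h => by
    rw [ha]
    exact (congrArg Abelianization.of (tprod_mul_right m g h)).trans (map_mul _ _ _)
  let S : M → Abelianization (NATensor μ φ) := fun m => ∏ h, f m h
  have haS : ∀ g m, a g (S m) = S (φ g m) := fun g m => by
    simp only [S, map_prod, ha]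
    exact Fintype.prod_equiv (MulAut.conj g).toEquiv _ _ fun _ => rfl
  have haW : ∀ g, a g (∏ m, S m) = ∏ m, S m := fun g => by
    simp only [map_prod, haS]
    exact Fintype.prod_equiv (φ g).toEquiv _ _ fun _ => rfl
  have hS : ∀ x m, S (x * m) = a (μ x) (S m) * S x := fun x m => by
    simp only [S, hl, map_prod, Finset.prod_mul_distrib]
  have hSpow : ∀ x, S x ^ Nat.card M = 1 := fun x => by
    have h := Fintype.prod_equiv (Equiv.mulLeft x) (fun m => S (x * m)) S fun _ => rfl
    simp only [hS, Finset.prod_mul_distrib, ← map_prod, haW, Finset.prod_const,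
      Finset.card_univ, mul_eq_left] at h
    rw [Nat.card_eq_fintype_card, h]
  have hf : f m g ^ Nat.card G * a g (S m) = S m := by
    have h := Fintype.prod_equiv (Equiv.mulLeft g) (fun h => f m (g * h)) (f m) fun _ => rfl
    simp only [hr, Finset.prod_mul_distrib, ← map_prod, Finset.prod_const,
      Finset.card_univ] at h
    rw [Nat.card_eq_fintype_card]
    exact h
  have h := congrArg (· ^ Nat.card M) hf
  simp only [mul_pow, ← map_pow, hSpow, map_one, mul_one] at h
  rw [pow_mul]
  exact h

theorem abelianization_of_pow [Finite M] [Finite G] (hcm : IsCrossedModule μ φ)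
    (t : NATensor μ φ) : Abelianization.of t ^ (Nat.card G * Nat.card M) = 1 := by
  have h : (powMonoidHom (Nat.card G * Nat.card M)).comp
      (Abelianization.of (G := NATensor μ φ)) = 1 :=
    hom_ext fun m g => abelianization_of_tprod_pow hcm m g
  exact DFunLike.congr_fun h t

theorem index_center [Finite M] {p : ℕ} [Fact p.Prime] (hM : IsPGroup p M)
    (hcm : IsCrossedModule μ φ) :
    ∃ n, (Subgroup.center (NATensor μ φ)).index = p ^ n := by
  have hle : (MulAut.conj (G := NATensor μ φ)).range ≤ ((act hcm).comp μ).range := by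
    rintro _ ⟨t, rfl⟩
    obtain ⟨m, hm⟩ := conj_mem_range hcm t
    exact ⟨m, hm.symm⟩
  have hker : (MulAut.conj (G := NATensor μ φ)).ker = Subgroup.center _ := by
    ext t
    rw [MonoidHom.mem_ker, Subgroup.mem_center_iff, MulEquiv.ext_iff]
    exact forall_congr' fun s => by
      rw [MulAut.conj_apply, MulAut.one_apply, mul_inv_eq_iff_eq_mul, eq_comm]
  rw [← hker, Subgroup.index_ker]
  have hr : IsPGroup p ((act hcm).comp μ).range :=
    hM.of_surjective _ ((act hcm).comp μ).rangeRestrict_surjective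
  have : Finite (MulAut.conj (G := NATensor μ φ)).range :=
    have := Finite.of_surjective _ ((act hcm).comp μ).rangeRestrict_surjective
    Finite.of_injective _ (Subgroup.inclusion_injective hle)
  exact IsPGroup.iff_card.1 (hr.of_injective _ (Subgroup.inclusion_injective hle))

theorem isPGroup [Finite M] [Finite G] {p : ℕ} [Fact p.Prime] (hM : IsPGroup p M)
    (hG : IsPGroup p G) (hcm : IsCrossedModule μ φ) : IsPGroup p (NATensor μ φ) := by
  obtain ⟨n, hn⟩ := index_center hM hcm
  obtain ⟨a, ha⟩ := IsPGroup.iff_card.1 hM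
  obtain ⟨b, hb⟩ := IsPGroup.iff_card.1 hG
  have : (Subgroup.center (NATensor μ φ)).FiniteIndex :=
    ⟨hn ▸ pow_ne_zero _ (Nat.Prime.ne_zero Fact.out)⟩
  refine isPGroup_iff_pow_pow_eq_one.2 fun t => ⟨n + (b + a), ?_⟩
  have h := congrArg (Abelianization.lift (MonoidHom.transferCenterPow (NATensor μ φ)))
    (abelianization_of_pow hcm t)
  rw [map_pow, Abelianization.lift_apply_of, map_one, ha, hb, ← pow_add] at h
  have h' := congrArg Subtype.val h
  rwa [Subgroup.coe_pow, MonoidHom.transferCenterPow_apply, hn, ← pow_mul, ← pow_add] at h'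

theorem finite [Finite M] [Finite G] {p : ℕ} [Fact p.Prime] (hM : IsPGroup p M)
    (hG : IsPGroup p G) (hcm : IsCrossedModule μ φ) : Finite (NATensor μ φ) := by
  obtain ⟨n, hn⟩ := index_center hM hcm
  have : (Subgroup.center (NATensor μ φ)).FiniteIndex :=
    ⟨hn ▸ pow_ne_zero _ (Nat.Prime.ne_zero Fact.out)⟩
  have : Group.FG (NATensor μ φ) :=
    Group.fg_of_surjective (PresentedGroup.mk_surjective (tensorRels μ φ))
  have : Finite (Subgroup.center (NATensor μ φ)) :=
    CommGroup.finite_of_fg_isMulTorsion _ fun t =>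
      ((isPGroup hM hG hcm).to_subgroup _).isOfFinOrder (Nat.Prime.ne_zero Fact.out) t
  exact Finite.of_subgroup_quotient (Subgroup.center (NATensor μ φ))

end NATensor

open scoped commutatorElement in
/-- If every invariant normal subgroup `Q ≥ P` modulo which `S` is fixed by `G` contains `S`, then
`P` contains `S`, provided that the semidirect product is nilpotent. -/
theorem subset_of_forall_fixed_subset {T G : Type*} [Group T] [Group G] (ψ : G →* MulAut T)
    [Group.IsNilpotent (T ⋊[ψ] G)] {P : Subgroup T} [P.Normal]
    (hP : ∀ g, ∀ t ∈ P, ψ g t ∈ P) {S : Set T}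
    (h : ∀ Q : Subgroup T, Q.Normal → (∀ g, ∀ t ∈ Q, ψ g t ∈ Q) → P ≤ Q →
      (∀ g, ∀ s ∈ S, ψ g s * s⁻¹ ∈ Q) → S ⊆ Q) : S ⊆ P := by
  let L : ℕ → Subgroup T := fun k =>
    ((⊤ : Subgroup (T ⋊[ψ] G)).lowerCentralSeries k).comap SemidirectProduct.inl
  have hLinv : ∀ k g, ∀ t ∈ L k, ψ g t ∈ L k := fun k g t ht => by
    rw [Subgroup.mem_comap, SemidirectProduct.inl_aut, map_inv]
    exact Subgroup.Normal.conj_mem (H := (⊤ : Subgroup (T ⋊[ψ] G)).lowerCentralSeries k)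
      inferInstance _ ht _
  have hLsucc : ∀ k g, ∀ t ∈ L k, ψ g t * t⁻¹ ∈ L (k + 1) := fun k g t ht => by
    have hc : ⁅(SemidirectProduct.inr g : T ⋊[ψ] G), SemidirectProduct.inl t⁆ ∈
        (⊤ : Subgroup (T ⋊[ψ] G)).lowerCentralSeries (k + 1) := by
      rw [Subgroup.lowerCentralSeries_succ, Subgroup.commutator_comm]
      exact Subgroup.commutator_mem_commutator (Subgroup.mem_top _) ht
    rw [Subgroup.mem_comap, map_mul, SemidirectProduct.inl_aut, map_inv, map_inv]
    exact hc
  have hinv : ∀ k g, ∀ t ∈ P ⊔ L k, ψ g t ∈ P ⊔ L k := fun k g t ht => by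
    obtain ⟨x, hx, y, hy, rfl⟩ := Subgroup.mem_sup_of_normal_left.1 ht
    rw [map_mul]
    exact mul_mem (Subgroup.mem_sup_left (hP g x hx)) (Subgroup.mem_sup_right (hLinv k g y hy))
  have hS : ∀ k, S ⊆ (P ⊔ L k : Subgroup T) := fun k => by
    induction k with
    | zero =>
      exact fun s _ =>
        Subgroup.mem_sup_right (Subgroup.mem_top (SemidirectProduct.inl s : T ⋊[ψ] G))
    | succ k ih =>
      refine h _ inferInstance (hinv _) le_sup_left fun g s hs => ?_
      obtain ⟨x, hx, y, hy, rfl⟩ := Subgroup.mem_sup_of_normal_left.1 (ih hs)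
      rw [map_mul, mul_inv_rev, show ψ g x * ψ g y * (y⁻¹ * x⁻¹) =
        ψ g x * (ψ g y * y⁻¹) * x⁻¹ by group]
      exact mul_mem (mul_mem (Subgroup.mem_sup_left (hP g x hx))
        (Subgroup.mem_sup_right (hLsucc k g y hy))) (Subgroup.mem_sup_left (inv_mem hx))
  obtain ⟨n, hn⟩ := Subgroup.nilpotent_iff_lowerCentralSeries.1
    (inferInstance : Group.IsNilpotent (T ⋊[ψ] G))
  have hL : L n = ⊥ := by
    simp only [L, hn]
    exact (MonoidHom.ker_eq_bot_iff _).2 SemidirectProduct.inl_injective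
  simpa [hL] using hS n

theorem sPow_top_map_mem {T : Type*} [Group T] {k : ℕ} (f : T →* T) {t : T}
    (ht : t ∈ sPow (⊤ : Subgroup T) k) : f t ∈ sPow (⊤ : Subgroup T) k := by
  have : sPow (⊤ : Subgroup T) k ≤ (sPow (⊤ : Subgroup T) k).comap f := by
    refine (Subgroup.closure_le _).2 ?_
    rintro _ ⟨x, -, rfl⟩
    exact Subgroup.subset_closure ⟨f x, Subgroup.mem_top _, (map_pow f x k).symm⟩
  exact this ht

theorem pow_mem_sPow_top {T : Type*} [Group T] {k : ℕ} (t : T) :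
    t ^ k ∈ sPow (⊤ : Subgroup T) k :=
  Subgroup.subset_closure ⟨t, Subgroup.mem_top _, rfl⟩

instance sPow_top_normal {T : Type*} [Group T] {k : ℕ} : (sPow (⊤ : Subgroup T) k).Normal :=
  ⟨fun _ ht g => sPow_top_map_mem (MulAut.conj g).toMonoidHom ht⟩

namespace NATensor

open scoped commutatorElement IsMulCommutative

variable {M G : Type*} [Group M] [Group G] {μ : M →* G} {φ : G →* MulAut M}

/-- If `M` fixes the elements `ᵐt * t⁻¹` modulo `Q`, then `m ⊗ n ^ k` is congruent to
`(m ⊗ n) ^ k * c ^ (k choose 2)`, where `c = ⁿ(m ⊗ n) * (m ⊗ n)⁻¹`. -/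
theorem mk_tprod_pow_right (hcm : IsCrossedModule μ φ) {Q : Subgroup (NATensor μ φ)} [Q.Normal]
    (hfix : ∀ (n m : M) t, act hcm (μ n) (act hcm (μ m) t * t⁻¹) * (act hcm (μ m) t * t⁻¹)⁻¹ ∈ Q)
    (m n : M) (k : ℕ) :
    (QuotientGroup.mk (natTprod μ φ m (μ n ^ k)) : NATensor μ φ ⧸ Q) =
      QuotientGroup.mk (natTprod μ φ m (μ n)) ^ k *
        QuotientGroup.mk (act hcm (μ n) (natTprod μ φ m (μ n)) * (natTprod μ φ m (μ n))⁻¹) ^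
          k.choose 2 := by
  set t := natTprod μ φ m (μ n) with ht
  set c := act hcm (μ n) t * t⁻¹ with hc
  have hfixc : ∀ x : M, (QuotientGroup.mk (act hcm (μ x) c) : NATensor μ φ ⧸ Q) =
      QuotientGroup.mk c := fun x => by
    rw [← mul_inv_eq_one]
    exact (QuotientGroup.eq_one_iff _).2 (hfix x n t)
  have hcomm : Commute (QuotientGroup.mk t : NATensor μ φ ⧸ Q) (QuotientGroup.mk c) := by
    obtain ⟨x, hx⟩ := conj_mem_range hcm t
    have h := hfixc x
    rw [← hx, MulAut.conj_apply, QuotientGroup.mk_mul, QuotientGroup.mk_mul,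
      QuotientGroup.mk_inv, mul_inv_eq_iff_eq_mul] at h
    exact h
  have hact : ∀ k : ℕ, (QuotientGroup.mk (act hcm (μ n ^ k) t) : NATensor μ φ ⧸ Q) =
      QuotientGroup.mk c ^ k * QuotientGroup.mk t := fun k => by
    induction k with
    | zero => simp
    | succ k ih =>
      rw [pow_succ, map_mul, MulAut.mul_apply, show act hcm (μ n) t = c * t by simp [hc], map_mul,
        QuotientGroup.mk_mul, ih, ← map_pow μ, hfixc, pow_succ', mul_assoc]
  induction k with
  | zero => simp [tprod_one_right hcm]
  | succ k ih =>
    rw [pow_succ, tprod_mul_right_act hcm, QuotientGroup.mk_mul, ih, ← ht, hact,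
      Nat.choose_succ_succ' k 1, Nat.choose_one_right, pow_succ, pow_add, mul_assoc,
      mul_assoc, ← mul_assoc (_ ^ k.choose 2), ← pow_add,
      ← (hcomm.pow_right (k.choose 2 + k)).eq, add_comm, pow_add]

/-- If `M` acts trivially on `[M, M ⊗ G]` modulo `Q ≥ (M ⊗ G) ^ p`, then it acts trivially on
`M ⊗ G` modulo `Q`. -/
theorem act_div_mem (hcm : IsCrossedModule μ φ) {p : ℕ} (hodd : Odd p)
    (hemb : ⁅μ.range, (⊤ : Subgroup G)⁆ ≤ sPow μ.range p)
    {Q : Subgroup (NATensor μ φ)} [Q.Normal]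
    (hinv : ∀ g, ∀ t ∈ Q, act hcm g t ∈ Q) (hQ : sPow ⊤ p ≤ Q)
    (hfix : ∀ (n m : M) t, act hcm (μ n) (act hcm (μ m) t * t⁻¹) * (act hcm (μ m) t * t⁻¹)⁻¹ ∈ Q)
    (m : M) (t : NATensor μ φ) : act hcm (μ m) t * t⁻¹ ∈ Q := by
  have hpow : ∀ t : NATensor μ φ ⧸ Q, t ^ p = 1 := fun t => by
    induction t using QuotientGroup.induction_on with
    | H t => exact (QuotientGroup.eq_one_iff _).2 (hQ (pow_mem_sPow_top t))
  have hp2 : p ∣ p.choose 2 := by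
    obtain ⟨r, rfl⟩ := hodd
    rw [Nat.choose_two_right]
    exact ⟨r, by rw [Nat.add_sub_cancel, mul_left_comm, Nat.mul_div_cancel_left _ two_pos]⟩
  have htriv : ∀ g ∈ sPow μ.range p, ∀ m, natTprod μ φ m g ∈ Q := fun g hg => by
    induction hg using Subgroup.closure_induction with
    | mem g hg =>
      obtain ⟨_, ⟨n, rfl⟩, rfl⟩ := hg
      intro m
      obtain ⟨r, hr⟩ := hp2
      rw [← QuotientGroup.eq_one_iff]
      exact (mk_tprod_pow_right hcm hfix m n p).trans (by simp [hr, pow_mul, hpow])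
    | one => exact fun m => tprod_one_right hcm m ▸ one_mem Q
    | mul x y _ _ hx hy =>
      intro m
      rw [tprod_mul_right_act hcm]
      exact mul_mem (hx m) (hinv _ _ (hy m))
    | inv x _ hx =>
      intro m
      have h := tprod_mul_right_act hcm m x⁻¹ x
      rw [inv_mul_cancel, tprod_one_right hcm] at h
      rw [eq_inv_of_mul_eq_one_left h.symm]
      exact inv_mem (hinv _ _ (hx m))
  have hhom : (QuotientGroup.mk' Q).comp (act hcm (μ m)).toMonoidHom = QuotientGroup.mk' Q :=
    hom_ext fun x g => by
      rw [← mul_inv_eq_one]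
      refine (QuotientGroup.eq_one_iff _).2 ?_
      have h := htriv _ (hemb (Subgroup.commutator_mem_commutator ⟨x, rfl⟩ (Subgroup.mem_top g))) m
      rwa [← act_div_tprod hcm] at h
  exact (QuotientGroup.eq_one_iff _).1 (mul_inv_eq_one.2 (DFunLike.congr_fun hhom t))

theorem act_div_mem_sPow [Finite M] [Finite G] {p : ℕ} [Fact p.Prime] (hodd : Odd p)
    (hM : IsPGroup p M) (hG : IsPGroup p G) (hcm : IsCrossedModule μ φ)
    (hemb : ⁅μ.range, (⊤ : Subgroup G)⁆ ≤ sPow μ.range p) (m : M) (t : NATensor μ φ) :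
    act hcm (μ m) t * t⁻¹ ∈ sPow (⊤ : Subgroup (NATensor μ φ)) p := by
  have := finite hM hG hcm
  obtain ⟨a, ha⟩ := IsPGroup.iff_card.1 (isPGroup hM hG hcm)
  obtain ⟨b, hb⟩ := IsPGroup.iff_card.1 hG
  have hH : IsPGroup p (NATensor μ φ ⋊[act hcm] G) :=
    IsPGroup.of_card (n := a + b) (by rw [SemidirectProduct.card, ha, hb, pow_add])
  have : Finite (NATensor μ φ ⋊[act hcm] G) := Finite.of_equiv _ SemidirectProduct.equivProd.symm
  have := hH.isNilpotent
  refine subset_of_forall_fixed_subset (act hcm)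
    (S := {x | ∃ m t, x = act hcm (μ m) t * t⁻¹})
    (fun g t ht => sPow_top_map_mem (act hcm g).toMonoidHom ht) ?_ ⟨m, t, rfl⟩
  rintro Q hQn hinv hQ hfix _ ⟨m, t, rfl⟩
  exact act_div_mem hcm hodd hemb hinv hQ (fun n m t => hfix _ _ ⟨m, t, rfl⟩) m t

end NATensor

theorem stmt_14 {p : ℕ} (hp : p.Prime) (hodd : Odd p)
    {M G : Type*} [Group M] [Group G] [Finite M] [Finite G]
    (hM : IsPGroup p M) (hG : IsPGroup p G)
    (μ : M →* G) (φ : G →* MulAut M) (hcm : IsCrossedModule μ φ)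
    (hMpow : ⁅(⊤ : Subgroup M), (⊤ : Subgroup M)⁆ ≤ sPow (⊤ : Subgroup M) p)
    (hemb : ⁅μ.range, (⊤ : Subgroup G)⁆ ≤ sPow μ.range p) :
    Subgroup.closure {x : NATensor μ φ | ∃ m g, x = natTprod μ φ (m ^ p) g} ≤
        sPow (⊤ : Subgroup (NATensor μ φ)) p ∧
      Finite (NATensor μ φ) ∧ IsPGroup p (NATensor μ φ) ∧
      ⁅(⊤ : Subgroup (NATensor μ φ)), (⊤ : Subgroup (NATensor μ φ))⁆ ≤
        sPow (⊤ : Subgroup (NATensor μ φ)) p := by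
  have := Fact.mk hp
  have hact : ∀ (m : M) (t : NATensor μ φ),
      (QuotientGroup.mk (NATensor.act hcm (μ m) t) :
        NATensor μ φ ⧸ sPow (⊤ : Subgroup (NATensor μ φ)) p) = QuotientGroup.mk t := fun m t =>
    mul_inv_eq_one.1 ((QuotientGroup.eq_one_iff _).2
      (NATensor.act_div_mem_sPow hodd hM hG hcm hemb m t))
  refine ⟨?_, NATensor.finite hM hG hcm, NATensor.isPGroup hM hG hcm, ?_⟩
  · rw [Subgroup.closure_le]
    rintro _ ⟨m, g, rfl⟩
    have h : ∀ k : ℕ, (QuotientGroup.mk (natTprod μ φ (m ^ k) g) :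
        NATensor μ φ ⧸ sPow (⊤ : Subgroup (NATensor μ φ)) p) =
        QuotientGroup.mk (natTprod μ φ m g) ^ k := fun k => by
      induction k with
      | zero => simp [NATensor.tprod_one_left hcm]
      | succ k ih =>
        rw [pow_succ', NATensor.tprod_mul_left_act hcm, QuotientGroup.mk_mul, hact, ih, pow_succ]
    exact (QuotientGroup.eq_one_iff _).1
      ((h p).trans ((QuotientGroup.eq_one_iff _).2 (pow_mem_sPow_top _)))
  · rw [Subgroup.commutator_le]
    intro s _ t _
    obtain ⟨m, hm⟩ := NATensor.conj_mem_range hcm s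
    rw [commutatorElement_def, ← MulAut.conj_apply, hm]
    exact NATensor.act_div_mem_sPow hodd hM hG hcm hemb m t
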